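/- For every α∈(0,1] and θ > 0, the integral ∫_0^∞ (ln t)·θ t^{α−1} E_{α,α}(−θ t^α) dt converges absolutely and equals −(ln θ)/α − γ, where γ is the Euler–Mascheroni constant. (This is the mean of the logarithm of a Mittag-Leffler ML(α,θ) waiting time.) -/

import Mathlib

open MeasureTheory Real

/-- Two-parameter Mittag-Leffler function `E_{β,γ}(w) = ∑ w^r / Γ(βr+γ)`. -/
noncomputable def mittagLeffler (β γ w : ℝ) : ℝ :=
  ∑' r : ℕ, w ^ r / Real.Gamma (β * r + γ)

/-!
The density `f` of `ML(α, θ)` is the resolvent of the kernel `a(t) = θ t^{α-1} / Γ(α)`. Since `a`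
is log-convex for `α ≤ 1`, `f` is positive, hence `f ≤ a`, so the convolution equation
`f + a * f = a` may be Laplace transformed at every `p > 0`: the transform of `f` is
`θ / (p ^ α + θ)`.

For independent `X ~ Exp(1)` and `T ~ ML(α, θ)` this is the probability that `X / T > p`. Comparing
with the case `α = θ = 1`, `log X - log T` has the law of `(log X - log Y + log θ) / α`, where `Y`
is an independent copy of `X`. Taking means, `-γ - E[log T] = log θ / α`.
-/

open Filter Set Topology ProbabilityTheory

/-! ### The Mittag-Leffler function -/

theorem rpow_mul_exp_neg_le_Gamma {A y : ℝ} (hA : 0 < A) (hy : 1 ≤ y) :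
    A ^ (y - 1) * exp (-A) ≤ Gamma y := by
  have hint := GammaIntegral_convergent (zero_lt_one.trans_le hy)
  calc A ^ (y - 1) * exp (-A) = ∫ x in Ioi A, exp (-x) * A ^ (y - 1) := by
        rw [integral_mul_const, integral_exp_neg_Ioi, mul_comm]
    _ ≤ ∫ x in Ioi A, exp (-x) * x ^ (y - 1) := by
        refine setIntegral_mono_on ((integrableOn_exp_neg_Ioi A).mul_const _)
          (hint.mono_set (Ioi_subset_Ioi hA.le)) measurableSet_Ioi fun x hx ↦ ?_
        have := rpow_le_rpow hA.le (mem_Ioi.mp hx).le (sub_nonneg.mpr hy)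
        gcongr
    _ ≤ ∫ x in Ioi 0, exp (-x) * x ^ (y - 1) := by
        refine setIntegral_mono_set hint ?_ (Ioi_subset_Ioi hA.le).eventuallyLE
        filter_upwards [ae_restrict_mem measurableSet_Ioi] with x hx
        have : 0 < x := hx
        positivity
    _ = Gamma y := (Gamma_eq_integral (zero_lt_one.trans_le hy)).symm

theorem summable_pow_div_Gamma {β : ℝ} (hβ : 0 < β) (γ w : ℝ) :
    Summable fun r : ℕ ↦ w ^ r / Gamma (β * r + γ) := by
  obtain ⟨A, hA, hwA⟩ : ∃ A : ℝ, 0 < A ∧ |w| < A ^ β :=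
    ((eventually_gt_atTop 0).and ((tendsto_rpow_atTop hβ).eventually_gt_atTop |w|)).exists
  have hAβ : 0 < A ^ β := by positivity
  have hgeom : Summable fun r : ℕ ↦ A ^ (1 - γ) * exp A * (|w| / A ^ β) ^ r :=
    (summable_geometric_of_lt_one (by positivity) ((div_lt_one hAβ).mpr hwA)).mul_left _
  refine .of_norm_bounded_eventually_nat hgeom ?_
  have hlarge : Tendsto (fun r : ℕ ↦ β * r + γ) atTop atTop :=
    tendsto_atTop_add_const_right _ _ (tendsto_natCast_atTop_atTop.const_mul_atTop hβ)
  filter_upwards [hlarge.eventually_ge_atTop 1] with r hr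
  have hΓ := rpow_mul_exp_neg_le_Gamma hA hr
  rw [norm_div, norm_pow, norm_eq_abs, norm_of_nonneg (Gamma_nonneg_of_nonneg (by linarith))]
  calc |w| ^ r / Gamma (β * r + γ) ≤ |w| ^ r / (A ^ (β * r + γ - 1) * exp (-A)) := by gcongr
    _ = A ^ (1 - γ) * exp A * (|w| / A ^ β) ^ r := by
        rw [show β * r + γ - 1 = β * r - (1 - γ) by ring, rpow_sub hA, rpow_mul hA.le,
          rpow_natCast, exp_neg, div_pow]
        field_simp

theorem continuous_mittagLeffler {β : ℝ} (hβ : 0 < β) (γ : ℝ) :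
    Continuous (mittagLeffler β γ) := by
  rw [continuous_iff_continuousAt]
  intro w
  have hball : ContinuousOn (mittagLeffler β γ) (Metric.closedBall 0 (|w| + 1)) := by
    refine continuousOn_tsum (fun r ↦ by fun_prop)
      (summable_pow_div_Gamma hβ γ (|w| + 1)).norm fun r z hz ↦ ?_
    rw [mem_closedBall_zero_iff] at hz
    rw [norm_div, norm_pow, norm_div, norm_pow, norm_of_nonneg (by positivity : 0 ≤ |w| + 1)]
    gcongr
  refine hball.continuousAt (mem_of_superset (Metric.ball_mem_nhds w one_pos) fun z hz ↦ ?_)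
  rw [mem_ball_iff_norm] at hz
  rw [mem_closedBall_zero_iff]
  linarith [norm_sub_norm_le z w, norm_eq_abs w]

theorem continuous_mittagLeffler_mul_rpow {β : ℝ} (hβ : 0 < β) (γ c : ℝ) :
    Continuous fun t : ℝ ↦ mittagLeffler β γ (c * t ^ β) :=
  (continuous_mittagLeffler hβ γ).comp
    (continuous_const.mul (continuous_id.rpow_const fun _ ↦ .inr hβ.le))

theorem mittagLeffler_zero (β γ : ℝ) : mittagLeffler β γ 0 = 1 / Gamma γ := by
  rw [mittagLeffler, tsum_eq_single 0 fun r hr ↦ by simp [hr]]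
  simp

theorem mittagLeffler_eq_inv_Gamma_add {β : ℝ} (hβ : 0 < β) (γ w : ℝ) :
    mittagLeffler β γ w = 1 / Gamma γ + w * mittagLeffler β (γ + β) w := by
  rw [mittagLeffler, (summable_pow_div_Gamma hβ γ w).tsum_eq_zero_add, mittagLeffler,
    ← tsum_mul_left]
  congr 1
  · simp
  · refine tsum_congr fun r ↦ ?_
    rw [show β * ((r + 1 : ℕ) : ℝ) + γ = β * r + (γ + β) by push_cast; ring]
    ring

theorem mittagLeffler_one_one : mittagLeffler 1 1 = exp := by
  funext w
  simp only [mittagLeffler, one_mul, Gamma_nat_eq_factorial]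
  rw [exp_eq_exp_ℝ, NormedSpace.exp_eq_tsum_div]

theorem integral_rpow_mul_sub_rpow {u v t : ℝ} (hu : 0 < u) (hv : 0 < v) (ht : 0 < t) :
    ∫ s in 0..t, s ^ (u - 1) * (t - s) ^ (v - 1)
      = Gamma u * Gamma v / Gamma (u + v) * t ^ (u + v - 1) := by
  have hcast : ∀ s ∈ uIcc 0 t, (s : ℂ) ^ ((u : ℂ) - 1) * ((t : ℂ) - s) ^ ((v : ℂ) - 1)
      = ((s ^ (u - 1) * (t - s) ^ (v - 1) : ℝ) : ℂ) := fun s hs ↦ by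
    rw [uIcc_of_le ht.le] at hs
    push_cast [Complex.ofReal_cpow hs.1, Complex.ofReal_cpow (sub_nonneg.mpr hs.2)]
    rfl
  have hscaled := Complex.betaIntegral_scaled u v ht
  rw [intervalIntegral.integral_congr hcast, intervalIntegral.integral_ofReal,
    Complex.betaIntegral_eq_Gamma_mul_div _ _ (by simpa) (by simpa)] at hscaled
  apply Complex.ofReal_injective
  rw [hscaled]
  push_cast [Complex.ofReal_cpow ht.le, ← Complex.Gamma_ofReal]
  ring

theorem intervalIntegrable_rpow_mul_sub_rpow {u v t : ℝ} (hu : 0 < u) (hv : 0 < v) (ht : 0 < t) :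
    IntervalIntegrable (fun s ↦ s ^ (u - 1) * (t - s) ^ (v - 1)) volume 0 t := by
  refine intervalIntegral.intervalIntegrable_of_integral_ne_zero ?_
  rw [integral_rpow_mul_sub_rpow hu hv ht]
  have := Gamma_pos_of_pos hu
  have := Gamma_pos_of_pos hv
  have := Gamma_pos_of_pos (add_pos hu hv)
  positivity

theorem intervalIntegrable_rpow_mul_mittagLeffler {β γ ν t : ℝ} (hβ : 0 < β) (hγ : 0 < γ)
    (hν : 0 < ν) (ht : 0 < t) (c : ℝ) :
    IntervalIntegrable (fun s ↦ s ^ (γ - 1) * (t - s) ^ (ν - 1) * mittagLeffler β γ (c * s ^ β))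
      volume 0 t :=
  (intervalIntegrable_rpow_mul_sub_rpow hγ hν ht).mul_continuousOn
    (continuous_mittagLeffler_mul_rpow hβ γ c).continuousOn

theorem pow_div_Gamma_mul_integral_rpow {β γ ν t : ℝ} (hβ : 0 < β) (hγ : 0 < γ) (hν : 0 < ν)
    (ht : 0 < t) (c : ℝ) (r : ℕ) :
    c ^ r / Gamma (β * r + γ) * ∫ s in 0..t, s ^ (β * r + γ - 1) * (t - s) ^ (ν - 1)
      = Gamma ν * t ^ (γ + ν - 1) * ((c * t ^ β) ^ r / Gamma (β * r + (γ + ν))) := by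
  have hpos : 0 < β * r + γ := by positivity
  have := Gamma_pos_of_pos hpos
  rw [integral_rpow_mul_sub_rpow hpos hν ht, mul_pow, ← rpow_mul_natCast ht.le,
    show β * r + γ + ν - 1 = (γ + ν - 1) + β * r by ring, rpow_add ht, add_assoc]
  field_simp

theorem integral_rpow_mul_mittagLeffler {β γ ν t : ℝ} (hβ : 0 < β) (hγ : 0 < γ) (hν : 0 < ν)
    (ht : 0 < t) (c : ℝ) :
    ∫ s in 0..t, s ^ (γ - 1) * (t - s) ^ (ν - 1) * mittagLeffler β γ (c * s ^ β)
      = Gamma ν * t ^ (γ + ν - 1) * mittagLeffler β (γ + ν) (c * t ^ β) := by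
  have hpos (r : ℕ) : 0 < β * r + γ := by positivity
  have hkernel (r : ℕ) := intervalIntegrable_rpow_mul_sub_rpow (hpos r) hν ht
  let F (r : ℕ) (s : ℝ) : ℝ :=
    c ^ r / Gamma (β * r + γ) * (s ^ (β * r + γ - 1) * (t - s) ^ (ν - 1))
  have hFint (r : ℕ) : ∫ s in Ioc 0 t, F r s
      = Gamma ν * t ^ (γ + ν - 1) * ((c * t ^ β) ^ r / Gamma (β * r + (γ + ν))) := by
    rw [← pow_div_Gamma_mul_integral_rpow hβ hγ hν ht,
      ← intervalIntegral.integral_of_le ht.le, intervalIntegral.integral_const_mul]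
  have hFnorm (r : ℕ) : ∫ s in Ioc 0 t, ‖F r s‖
      = Gamma ν * t ^ (γ + ν - 1) * ((|c| * t ^ β) ^ r / Gamma (β * r + (γ + ν))) := by
    rw [← pow_div_Gamma_mul_integral_rpow hβ hγ hν ht,
      ← intervalIntegral.integral_const_mul, intervalIntegral.integral_of_le ht.le]
    refine setIntegral_congr_fun measurableSet_Ioc fun s hs ↦ ?_
    have hs_pow := rpow_nonneg hs.1.le (β * r + γ - 1)
    have hts_pow := rpow_nonneg (sub_nonneg.mpr hs.2) (ν - 1)
    simp only [F, norm_mul, norm_div, norm_pow, norm_eq_abs, abs_of_pos (Gamma_pos_of_pos (hpos r))]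
    rw [abs_of_nonneg hs_pow, abs_of_nonneg hts_pow]
  have hsum := hasSum_integral_of_summable_integral_norm (F := F) (μ := volume.restrict (Ioc 0 t))
    (fun r ↦ (intervalIntegrable_iff_integrableOn_Ioc_of_le ht.le).mp ((hkernel r).const_mul _))
    (by simpa only [hFnorm] using (summable_pow_div_Gamma hβ _ _).mul_left _)
  rw [intervalIntegral.integral_of_le ht.le, mittagLeffler, ← tsum_mul_left]
  simp only [hFint] at hsum
  rw [hsum.tsum_eq]
  refine setIntegral_congr_fun measurableSet_Ioc fun s hs ↦ ?_
  rw [mittagLeffler, ← tsum_mul_left]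
  refine tsum_congr fun r ↦ ?_
  simp only [F]
  rw [mul_pow, ← rpow_mul_natCast hs.1.le,
    show β * r + γ - 1 = (γ - 1) + β * r by ring, rpow_add hs.1]
  ring

/-! ### Resolvents of log-convex kernels -/

/-- `f` is the resolvent of the kernel `a` on the half-line: it solves the Volterra equation
`f + a * f = a`, where `*` is convolution over `(0, t)`. -/
def IsVolterraResolvent (a f : ℝ → ℝ) : Prop :=
  ∀ t, 0 < t → f t + ∫ s in 0..t, a (t - s) * f s = a t

section Resolvent

variable {a f : ℝ → ℝ}

theorem exists_mem_Ico_forall_le_of_nonpos {t₁ t₀ : ℝ} (h : t₁ < t₀)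
    (hf : ContinuousOn f (Icc t₁ t₀)) (hpos : 0 < f t₁) (hf₀ : f t₀ ≤ 0) :
    ∃ t ∈ Ico t₁ t₀, 0 < f t ∧ ∀ s ∈ Icc t t₀, f s ≤ f t := by
  obtain ⟨t, ht, hmax⟩ := isCompact_Icc.exists_isMaxOn (nonempty_Icc.mpr h.le) hf
  have hft : 0 < f t := hpos.trans_le (hmax (left_mem_Icc.mpr h.le))
  refine ⟨t, ⟨ht.1, ht.2.lt_of_ne ?_⟩, hft, fun s hs ↦ hmax ⟨ht.1.trans hs.1, hs.2⟩⟩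
  rintro rfl
  exact hft.not_ge hf₀

theorem exists_first_nonpos (hf : ContinuousOn f (Ioi 0)) (hf₀ : ∀ᶠ t in 𝓝[>] 0, 0 < f t)
    (hneg : ∃ t, 0 < t ∧ f t ≤ 0) :
    ∃ t₀, 0 < t₀ ∧ f t₀ ≤ 0 ∧ ∀ t ∈ Ioo 0 t₀, 0 < f t := by
  obtain ⟨ε, hε, hfε⟩ := mem_nhdsGT_iff_exists_Ioo_subset.mp hf₀
  obtain ⟨b, hb, hfb⟩ := hneg
  have hle {t : ℝ} (ht : 0 < t) (hft : f t ≤ 0) : ε ≤ t :=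
    le_of_not_gt fun h ↦ (hfε ⟨ht, h⟩ : 0 < f t).not_ge hft
  have hcont : ContinuousOn f (Icc ε b) := hf.mono fun t ht ↦ (hε : 0 < ε).trans_le ht.1
  have hclosed : IsClosed (Icc ε b ∩ f ⁻¹' Iic 0) :=
    hcont.preimage_isClosed_of_isClosed isClosed_Icc isClosed_Iic
  obtain ⟨t₀, ⟨ht₀, hft₀⟩, hmin⟩ := (isCompact_Icc.of_isClosed_subset hclosed inter_subset_left)
    |>.exists_isLeast ⟨b, ⟨hle hb hfb, le_rfl⟩, hfb⟩
  refine ⟨t₀, (hε : 0 < ε).trans_le ht₀.1, hft₀, fun t ht ↦ lt_of_not_ge fun hft ↦ ?_⟩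
  exact ht.2.not_ge (hmin ⟨⟨hle ht.1 hft, ht.2.le.trans ht₀.2⟩, hft⟩)

theorem IsVolterraResolvent.mul_le_mul_integral_of_nonpos (h : IsVolterraResolvent a f)
    (hconv : ∀ t, 0 < t → IntervalIntegrable (fun s ↦ a (t - s) * f s) volume 0 t)
    (hlog : ∀ s t u, 0 < s → s < t → t ≤ u → a (u - s) * a t ≤ a (t - s) * a u)
    {t t₀ : ℝ} (ht : 0 < t) (htt₀ : t < t₀) (ha : 0 ≤ a t) (hf₀ : f t₀ ≤ 0)
    (hpos : ∀ s ∈ Ioo 0 t₀, 0 < f s) :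
    a t₀ * f t ≤ a t * ∫ s in t..t₀, a (t₀ - s) * f s := by
  have hconv₀ := hconv t₀ (ht.trans htt₀)
  have ht_mem : t ∈ uIcc 0 t₀ := mem_uIcc_of_le ht.le htt₀.le
  have hleft : IntervalIntegrable (fun s ↦ a (t₀ - s) * f s) volume 0 t :=
    hconv₀.mono_set (uIcc_subset_uIcc_left ht_mem)
  have hright : IntervalIntegrable (fun s ↦ a (t₀ - s) * f s) volume t t₀ :=
    hconv₀.mono_set (uIcc_subset_uIcc_right ht_mem)
  have hsplit := intervalIntegral.integral_add_adjacent_intervals hleft hright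
  have hcompare : a t * ∫ s in 0..t, a (t₀ - s) * f s ≤ a t₀ * ∫ s in 0..t, a (t - s) * f s := by
    rw [← intervalIntegral.integral_const_mul, ← intervalIntegral.integral_const_mul]
    refine intervalIntegral.integral_mono_on_of_le_Ioo ht.le (hleft.const_mul _)
      ((hconv t ht).const_mul _) fun s hs ↦ ?_
    have := mul_le_mul_of_nonneg_right (hlog s t t₀ hs.1 hs.2 htt₀.le)
      (hpos s ⟨hs.1, hs.2.trans htt₀⟩).le
    linarith
  have ha₀ : a t * a t₀ ≤ a t * ∫ s in 0..t₀, a (t₀ - s) * f s :=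
    mul_le_mul_of_nonneg_left (by linarith [h t₀ (ht.trans htt₀)]) ha
  rw [← hsplit, mul_add] at ha₀
  have hat : f t = a t - ∫ s in 0..t, a (t - s) * f s := eq_sub_of_add_eq (h t ht)
  rw [hat, mul_sub]
  linarith

theorem eventually_mul_integral_lt {t₀ : ℝ} (hcont : ContinuousAt a t₀)
    (hint : ∀ t, IntervalIntegrable a volume 0 t) (hpos : 0 < a t₀) :
    ∀ᶠ t in 𝓝 t₀, a t * ∫ s in 0..(t₀ - t), a s < a t₀ := by
  have hprim : Continuous fun t ↦ ∫ s in 0..t, a s :=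
    intervalIntegral.continuous_primitive (fun b c ↦ (hint b).symm.trans (hint c)) 0
  have hlim : ContinuousAt (fun t ↦ a t * ∫ s in 0..(t₀ - t), a s) t₀ :=
    hcont.mul (hprim.comp (continuous_const.sub continuous_id)).continuousAt
  exact hlim.eventually_lt_const (by simpa using hpos)

theorem integral_kernel_mul_le {t t₀ M : ℝ} (htt₀ : t ≤ t₀) (ha : ∀ u, 0 < u → 0 ≤ a u)
    (ha_int : IntervalIntegrable a volume 0 (t₀ - t))
    (hconv : IntervalIntegrable (fun s ↦ a (t₀ - s) * f s) volume t t₀)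
    (hfM : ∀ s ∈ Ioo t t₀, f s ≤ M) :
    ∫ s in t..t₀, a (t₀ - s) * f s ≤ M * ∫ s in 0..(t₀ - t), a s := by
  have hint : IntervalIntegrable (fun s ↦ a (t₀ - s)) volume t t₀ := by
    simpa using (ha_int.comp_sub_left t₀).symm
  calc ∫ s in t..t₀, a (t₀ - s) * f s ≤ ∫ s in t..t₀, a (t₀ - s) * M :=
        intervalIntegral.integral_mono_on_of_le_Ioo htt₀ hconv (hint.mul_const _) fun s hs ↦
          mul_le_mul_of_nonneg_left (hfM s hs) (ha _ (sub_pos.mpr hs.2))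
    _ = M * ∫ s in 0..(t₀ - t), a s := by
        rw [intervalIntegral.integral_mul_const, intervalIntegral.integral_comp_sub_left, sub_self,
          mul_comm]

-- At a first zero `t₀`, log-convexity bounds `f` just before `t₀` by a small multiple of its own
-- maximum there.
theorem IsVolterraResolvent.pos (h : IsVolterraResolvent a f)
    (ha_pos : ∀ t, 0 < t → 0 < a t) (ha_cont : ContinuousOn a (Ioi 0))
    (ha_int : ∀ t, IntervalIntegrable a volume 0 t)
    (ha_log : ∀ s t u, 0 < s → s < t → t ≤ u → a (u - s) * a t ≤ a (t - s) * a u)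
    (hf_cont : ContinuousOn f (Ioi 0)) (hf₀ : ∀ᶠ t in 𝓝[>] 0, 0 < f t)
    (hconv : ∀ t, 0 < t → IntervalIntegrable (fun s ↦ a (t - s) * f s) volume 0 t)
    {t : ℝ} (ht : 0 < t) : 0 < f t := by
  by_contra! hft
  obtain ⟨t₀, ht₀, hft₀, hbefore⟩ := exists_first_nonpos hf_cont hf₀ ⟨t, ht, hft⟩
  have hsmall : ∀ᶠ t in 𝓝 t₀, a t * ∫ s in 0..(t₀ - t), a s < a t₀ :=
    eventually_mul_integral_lt (ha_cont.continuousAt (Ioi_mem_nhds ht₀)) ha_int (ha_pos t₀ ht₀)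
  obtain ⟨l, hl, hlsmall⟩ := mem_nhdsLT_iff_exists_Ioo_subset.mp
    (nhdsWithin_le_nhds (hsmall.and (eventually_gt_nhds ht₀)) : _ ∈ 𝓝[<] t₀)
  obtain ⟨t₁, hlt₁, ht₁t₀⟩ := exists_between (mem_Iio.mp hl)
  have ht₁ : 0 < t₁ := (hlsmall ⟨hlt₁, ht₁t₀⟩).2
  obtain ⟨t, ⟨ht₁t, htt₀⟩, hft, hmax⟩ := exists_mem_Ico_forall_le_of_nonpos ht₁t₀
    (hf_cont.mono fun s hs ↦ ht₁.trans_le hs.1) (hbefore t₁ ⟨ht₁, ht₁t₀⟩) hft₀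
  have ht : 0 < t := ht₁.trans_le ht₁t
  have hkernel : ∫ s in t..t₀, a (t₀ - s) * f s ≤ f t * ∫ s in 0..(t₀ - t), a s :=
    integral_kernel_mul_le htt₀.le (fun u hu ↦ (ha_pos u hu).le) (ha_int _)
      ((hconv t₀ ht₀).mono_set (uIcc_subset_uIcc_right (mem_uIcc_of_le ht.le htt₀.le)))
      fun s hs ↦ hmax s (Ioo_subset_Icc_self hs)
  have hle : a t₀ * f t ≤ f t * (a t * ∫ s in 0..(t₀ - t), a s) :=
    calc a t₀ * f t ≤ a t * ∫ s in t..t₀, a (t₀ - s) * f s :=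
          h.mul_le_mul_integral_of_nonpos hconv ha_log ht htt₀ (ha_pos t ht).le hft₀ hbefore
      _ ≤ a t * (f t * ∫ s in 0..(t₀ - t), a s) :=
          mul_le_mul_of_nonneg_left hkernel (ha_pos t ht).le
      _ = f t * (a t * ∫ s in 0..(t₀ - t), a s) := by ring
  have hlt := mul_lt_mul_of_pos_left (hlsmall ⟨hlt₁.trans_le ht₁t, htt₀⟩).1 hft
  linarith

theorem IsVolterraResolvent.le (h : IsVolterraResolvent a f) (ha : ∀ t, 0 < t → 0 ≤ a t)
    (hf : ∀ t, 0 < t → 0 ≤ f t) {t : ℝ} (ht : 0 < t) : f t ≤ a t := by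
  have hnonneg : 0 ≤ ∫ s in 0..t, a (t - s) * f s := by
    rw [intervalIntegral.integral_of_le ht.le, integral_Ioc_eq_integral_Ioo]
    exact setIntegral_nonneg measurableSet_Ioo fun s hs ↦
      mul_nonneg (ha _ (sub_pos.mpr hs.2)) (hf s hs.1)
  linarith [h t ht]

theorem IsVolterraResolvent.integral_exp_mul (h : IsVolterraResolvent a f) {p : ℝ}
    (ha : IntegrableOn (fun t ↦ exp (-(p * t)) * a t) (Ioi 0))
    (hf : IntegrableOn (fun t ↦ exp (-(p * t)) * f t) (Ioi 0)) :
    (∫ t in Ioi 0, exp (-(p * t)) * f t) * (1 + ∫ t in Ioi 0, exp (-(p * t)) * a t)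
      = ∫ t in Ioi 0, exp (-(p * t)) * a t := by
  have hconv := integral_posConvolution hf ha (ContinuousLinearMap.mul ℝ ℝ)
  simp only [ContinuousLinearMap.mul_apply'] at hconv
  rw [mul_add, mul_one, ← hconv, ← eq_sub_iff_add_eq', ← integral_sub ha hf]
  refine setIntegral_congr_fun measurableSet_Ioi fun t ht ↦ ?_
  rw [← mul_sub, ← h t ht, add_sub_cancel_left, ← intervalIntegral.integral_const_mul]
  congr 1 with s
  rw [show -(p * t) = -(p * s) + -(p * (t - s)) by ring, exp_add]
  ring

end Resolvent

/-! ### The Mittag-Leffler density -/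

/-- Convolution kernel of `θ` times the Riemann–Liouville fractional integral of order `α`. -/
noncomputable def abelKernel (α θ t : ℝ) : ℝ :=
  θ / Gamma α * t ^ (α - 1)

/-- Density on `(0, ∞)` of the Mittag-Leffler law `ML(α, θ)`; it is not truncated to zero outside
`(0, ∞)`. -/
noncomputable def mittagLefflerPDF (α θ t : ℝ) : ℝ :=
  θ * t ^ (α - 1) * mittagLeffler α α (-θ * t ^ α)

section Density

variable {α θ : ℝ}

theorem abelKernel_pos (hα : 0 < α) (hθ : 0 < θ) {t : ℝ} (ht : 0 < t) : 0 < abelKernel α θ t := by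
  have := Gamma_pos_of_pos hα
  unfold abelKernel
  positivity

theorem continuousOn_abelKernel (α θ : ℝ) : ContinuousOn (abelKernel α θ) (Ioi 0) :=
  continuousOn_const.mul (continuousOn_id.rpow_const fun _ ht ↦ .inl (ne_of_gt ht))

theorem intervalIntegrable_abelKernel (hα : 0 < α) (θ s t : ℝ) :
    IntervalIntegrable (abelKernel α θ) volume s t :=
  (intervalIntegral.intervalIntegrable_rpow' (by linarith)).const_mul _

-- `(u - s) * t ≥ (t - s) * u`, and `x ↦ x ^ (α - 1)` is antitone.
theorem abelKernel_sub_mul_le (hα : α ≤ 1) (θ : ℝ) {s t u : ℝ} (hs : 0 < s) (hst : s < t)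
    (htu : t ≤ u) :
    abelKernel α θ (u - s) * abelKernel α θ t ≤ abelKernel α θ (t - s) * abelKernel α θ u := by
  have hts : 0 < t - s := sub_pos.mpr hst
  have ht : 0 < t := hs.trans hst
  have hu : 0 < u := ht.trans_le htu
  have hrpow : (u - s) ^ (α - 1) * t ^ (α - 1) ≤ (t - s) ^ (α - 1) * u ^ (α - 1) := by
    rw [← mul_rpow (by linarith) ht.le, ← mul_rpow hts.le hu.le]
    exact rpow_le_rpow_of_nonpos (mul_pos hts hu) (by nlinarith) (by linarith)
  calc abelKernel α θ (u - s) * abelKernel α θ t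
      = (θ / Gamma α) ^ 2 * ((u - s) ^ (α - 1) * t ^ (α - 1)) := by unfold abelKernel; ring
    _ ≤ (θ / Gamma α) ^ 2 * ((t - s) ^ (α - 1) * u ^ (α - 1)) := by gcongr
    _ = abelKernel α θ (t - s) * abelKernel α θ u := by unfold abelKernel; ring

theorem abelKernel_sub_mul_mittagLefflerPDF (α θ s t : ℝ) :
    abelKernel α θ (t - s) * mittagLefflerPDF α θ s = θ ^ 2 / Gamma α *
      (s ^ (α - 1) * (t - s) ^ (α - 1) * mittagLeffler α α (-θ * s ^ α)) := by
  unfold abelKernel mittagLefflerPDF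
  ring

theorem intervalIntegrable_abelKernel_mul_mittagLefflerPDF (hα : 0 < α) (θ : ℝ) {t : ℝ}
    (ht : 0 < t) :
    IntervalIntegrable (fun s ↦ abelKernel α θ (t - s) * mittagLefflerPDF α θ s) volume 0 t := by
  simp only [abelKernel_sub_mul_mittagLefflerPDF]
  exact (intervalIntegrable_rpow_mul_mittagLeffler hα hα hα ht (-θ)).const_mul _

theorem isVolterraResolvent_mittagLefflerPDF (hα : 0 < α) (θ : ℝ) :
    IsVolterraResolvent (abelKernel α θ) (mittagLefflerPDF α θ) := fun t ht ↦ by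
  have := Gamma_pos_of_pos hα
  simp only [abelKernel_sub_mul_mittagLefflerPDF]
  rw [intervalIntegral.integral_const_mul, integral_rpow_mul_mittagLeffler hα hα hα ht,
    mittagLefflerPDF, mittagLeffler_eq_inv_Gamma_add hα, abelKernel,
    show α + α - 1 = (α - 1) + α by ring, rpow_add ht]
  field_simp
  ring

theorem continuousOn_mittagLefflerPDF (hα : 0 < α) (θ : ℝ) :
    ContinuousOn (mittagLefflerPDF α θ) (Ioi 0) :=
  (continuousOn_const.mul (continuousOn_id.rpow_const fun _ ht ↦ .inl (ne_of_gt ht))).mul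
    (continuous_mittagLeffler_mul_rpow hα α (-θ)).continuousOn

theorem eventually_mittagLefflerPDF_pos (hα : 0 < α) (hθ : 0 < θ) :
    ∀ᶠ t in 𝓝[>] 0, 0 < mittagLefflerPDF α θ t := by
  have hzero : 0 < mittagLeffler α α (-θ * 0 ^ α) := by
    simpa [zero_rpow hα.ne', mittagLeffler_zero] using Gamma_pos_of_pos hα
  have hcont := (continuous_mittagLeffler_mul_rpow hα α (-θ)).continuousAt (x := 0)
  filter_upwards [self_mem_nhdsWithin,
    nhdsWithin_le_nhds (hcont.eventually_const_lt hzero)] with t ht hpos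
  exact mul_pos (mul_pos hθ (rpow_pos_of_pos ht _)) hpos

theorem mittagLefflerPDF_pos (hα : α ∈ Ioc 0 1) (hθ : 0 < θ) {t : ℝ} (ht : 0 < t) :
    0 < mittagLefflerPDF α θ t :=
  (isVolterraResolvent_mittagLefflerPDF hα.1 θ).pos (fun _ ↦ abelKernel_pos hα.1 hθ)
    (continuousOn_abelKernel α θ) (intervalIntegrable_abelKernel hα.1 θ 0)
    (fun _ _ _ ↦ abelKernel_sub_mul_le hα.2 θ) (continuousOn_mittagLefflerPDF hα.1 θ)
    (eventually_mittagLefflerPDF_pos hα.1 hθ)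
    (fun _ ↦ intervalIntegrable_abelKernel_mul_mittagLefflerPDF hα.1 θ) ht

theorem mittagLefflerPDF_le_abelKernel (hα : α ∈ Ioc 0 1) (hθ : 0 < θ) {t : ℝ} (ht : 0 < t) :
    mittagLefflerPDF α θ t ≤ abelKernel α θ t :=
  (isVolterraResolvent_mittagLefflerPDF hα.1 θ).le (fun _ hs ↦ (abelKernel_pos hα.1 hθ hs).le)
    (fun _ hs ↦ (mittagLefflerPDF_pos hα hθ hs).le) ht

theorem integral_exp_mul_abelKernel (hα : 0 < α) (θ : ℝ) {p : ℝ} (hp : 0 < p) :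
    ∫ t in Ioi 0, exp (-(p * t)) * abelKernel α θ t = θ / p ^ α := by
  have := Gamma_pos_of_pos hα
  calc ∫ t in Ioi 0, exp (-(p * t)) * abelKernel α θ t
      = θ / Gamma α * ∫ t in Ioi 0, t ^ (α - 1) * exp (-(p * t)) := by
        rw [← integral_const_mul]
        congr 1 with t
        unfold abelKernel
        ring
    _ = θ / p ^ α := by
        rw [integral_rpow_mul_exp_neg_mul_Ioi hα hp, one_div, inv_rpow hp.le]
        field_simp

theorem integrableOn_exp_mul_abelKernel (hα : 0 < α) (hθ : 0 < θ) {p : ℝ} (hp : 0 < p) :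
    IntegrableOn (fun t ↦ exp (-(p * t)) * abelKernel α θ t) (Ioi 0) := by
  refine .of_integral_ne_zero ?_
  rw [integral_exp_mul_abelKernel hα θ hp]
  positivity

theorem integrableOn_exp_mul_mittagLefflerPDF (hα : α ∈ Ioc 0 1) (hθ : 0 < θ) {p : ℝ}
    (hp : 0 < p) : IntegrableOn (fun t ↦ exp (-(p * t)) * mittagLefflerPDF α θ t) (Ioi 0) := by
  have hcont : ContinuousOn (fun t ↦ exp (-(p * t)) * mittagLefflerPDF α θ t) (Ioi 0) :=
    .mul (by fun_prop) (continuousOn_mittagLefflerPDF hα.1 θ)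
  refine (integrableOn_exp_mul_abelKernel hα.1 hθ hp).mono'
    (hcont.aestronglyMeasurable measurableSet_Ioi) ?_
  filter_upwards [ae_restrict_mem measurableSet_Ioi] with t ht
  rw [norm_of_nonneg (mul_nonneg (exp_pos _).le (mittagLefflerPDF_pos hα hθ ht).le)]
  exact mul_le_mul_of_nonneg_left (mittagLefflerPDF_le_abelKernel hα hθ ht) (exp_pos _).le

theorem integral_exp_mul_mittagLefflerPDF (hα : α ∈ Ioc 0 1) (hθ : 0 < θ) {p : ℝ} (hp : 0 < p) :
    ∫ t in Ioi 0, exp (-(p * t)) * mittagLefflerPDF α θ t = θ / (p ^ α + θ) := by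
  have hresolvent := (isVolterraResolvent_mittagLefflerPDF hα.1 θ).integral_exp_mul
    (integrableOn_exp_mul_abelKernel hα.1 hθ hp) (integrableOn_exp_mul_mittagLefflerPDF hα hθ hp)
  rw [integral_exp_mul_abelKernel hα.1 θ hp] at hresolvent
  have := rpow_pos_of_pos hp α
  field_simp at hresolvent ⊢
  linarith

end Density

/-! ### The Mittag-Leffler law -/

/-- The Mittag-Leffler law `ML(α, θ)`, carried by `(0, ∞)`. -/
noncomputable def mittagLefflerMeasure (α θ : ℝ) : Measure ℝ :=
  (volume.restrict (Ioi 0)).withDensity fun t ↦ ENNReal.ofReal (mittagLefflerPDF α θ t)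

instance (α θ : ℝ) : SFinite (mittagLefflerMeasure α θ) :=
  inferInstanceAs (SFinite (Measure.withDensity _ _))

theorem ae_mittagLefflerMeasure_pos (α θ : ℝ) : ∀ᵐ t ∂mittagLefflerMeasure α θ, 0 < t :=
  (withDensity_absolutelyContinuous _ _).ae_le (ae_restrict_mem measurableSet_Ioi)

theorem mittagLefflerMeasure_one (θ : ℝ) : mittagLefflerMeasure 1 θ = expMeasure θ := by
  have hdensity (t : ℝ) : gammaPDF 1 θ t =
      (Ici 0).indicator (fun t ↦ ENNReal.ofReal (mittagLefflerPDF 1 θ t)) t := by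
    refine (exponentialPDF_eq θ t).trans ?_
    by_cases ht : 0 ≤ t <;> simp [ht, mittagLefflerPDF, mittagLeffler_one_one]
  rw [mittagLefflerMeasure, Measure.restrict_congr_set Ioi_ae_eq_Ici,
    ← withDensity_indicator measurableSet_Ici]
  exact congrArg volume.withDensity (funext fun t ↦ (hdensity t).symm)

section MittagLefflerMeasure

variable {α θ : ℝ}

theorem aemeasurable_mittagLefflerPDF (hα : 0 < α) (θ : ℝ) :
    AEMeasurable (fun t ↦ ENNReal.ofReal (mittagLefflerPDF α θ t)) (volume.restrict (Ioi 0)) :=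
  ((continuousOn_mittagLefflerPDF hα θ).aemeasurable measurableSet_Ioi).ennreal_ofReal

theorem toReal_mittagLefflerPDF_smul_ae_eq (hα : α ∈ Ioc 0 1) (hθ : 0 < θ) (g : ℝ → ℝ) :
    (fun t ↦ (ENNReal.ofReal (mittagLefflerPDF α θ t)).toReal • g t)
      =ᵐ[volume.restrict (Ioi 0)] fun t ↦ g t * mittagLefflerPDF α θ t := by
  filter_upwards [ae_restrict_mem measurableSet_Ioi] with t ht
  rw [ENNReal.toReal_ofReal (mittagLefflerPDF_pos hα hθ ht).le, smul_eq_mul, mul_comm]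

theorem integrable_mittagLefflerMeasure_iff (hα : α ∈ Ioc 0 1) (hθ : 0 < θ) {g : ℝ → ℝ} :
    Integrable g (mittagLefflerMeasure α θ) ↔
      IntegrableOn (fun t ↦ g t * mittagLefflerPDF α θ t) (Ioi 0) := by
  rw [mittagLefflerMeasure, integrable_withDensity_iff_integrable_smul₀'
    (aemeasurable_mittagLefflerPDF hα.1 θ) (ae_of_all _ fun _ ↦ ENNReal.ofReal_lt_top)]
  exact integrable_congr (toReal_mittagLefflerPDF_smul_ae_eq hα hθ g)

theorem integral_mittagLefflerMeasure (hα : α ∈ Ioc 0 1) (hθ : 0 < θ) (g : ℝ → ℝ) :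
    ∫ t, g t ∂mittagLefflerMeasure α θ = ∫ t in Ioi 0, g t * mittagLefflerPDF α θ t := by
  rw [mittagLefflerMeasure, integral_withDensity_eq_integral_toReal_smul₀
    (aemeasurable_mittagLefflerPDF hα.1 θ) (ae_of_all _ fun _ ↦ ENNReal.ofReal_lt_top)]
  exact integral_congr_ae (toReal_mittagLefflerPDF_smul_ae_eq hα hθ g)

theorem lintegral_exp_mittagLefflerMeasure (hα : α ∈ Ioc 0 1) (hθ : 0 < θ) {p : ℝ} (hp : 0 < p) :
    ∫⁻ t, ENNReal.ofReal (exp (-(p * t))) ∂mittagLefflerMeasure α θ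
      = ENNReal.ofReal (θ / (p ^ α + θ)) := by
  rw [← integral_exp_mul_mittagLefflerPDF hα hθ hp,
    ← integral_mittagLefflerMeasure hα hθ fun t ↦ exp (-(p * t))]
  refine (ofReal_integral_eq_lintegral_ofReal ?_ (ae_of_all _ fun _ ↦ (exp_pos _).le)).symm
  exact (integrable_mittagLefflerMeasure_iff hα hθ).mpr
    (integrableOn_exp_mul_mittagLefflerPDF hα hθ hp)

end MittagLefflerMeasure

instance : IsProbabilityMeasure (expMeasure 1) := isProbabilityMeasure_expMeasure one_pos

theorem ae_expMeasure_pos (r : ℝ) : ∀ᵐ t ∂expMeasure r, 0 < t :=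
  mittagLefflerMeasure_one r ▸ ae_mittagLefflerMeasure_pos 1 r

theorem expMeasure_Ioi {r : ℝ} (hr : 0 < r) {u : ℝ} (hu : 0 ≤ u) :
    expMeasure r (Ioi u) = ENNReal.ofReal (exp (-(r * u))) := by
  have := isProbabilityMeasure_expMeasure hr
  have hexp : exp (-(r * u)) ≤ 1 := exp_le_one_iff.mpr (neg_nonpos.mpr (mul_nonneg hr.le hu))
  rw [← compl_Iic, prob_compl_eq_one_sub measurableSet_Iic, ← ofReal_cdf, cdf_expMeasure_eq hr,
    if_pos hu, ← ENNReal.ofReal_one, ← ENNReal.ofReal_sub _ (sub_nonneg.mpr hexp), sub_sub_cancel]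

theorem integral_log_mul_exp_neg :
    ∫ t in Ioi 0, log t * exp (-t) = -eulerMascheroniConstant := by
  have hGamma : Complex.GammaIntegral =ᶠ[𝓝 1] Complex.Gamma := by
    filter_upwards [(Complex.continuous_re.isOpen_preimage _ isOpen_Ioi).mem_nhds
      (by simp : (1 : ℂ) ∈ Complex.re ⁻¹' Ioi 0)] with s hs
    exact (Complex.Gamma_eq_integral hs).symm
  have hunique := (Complex.hasDerivAt_GammaIntegral (by simp)).unique
    (Complex.hasDerivAt_Gamma_one.congr_of_eventuallyEq hGamma)
  simp only [sub_self, Complex.cpow_zero, one_mul] at hunique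
  exact_mod_cast hunique

theorem integral_log_expMeasure : ∫ t, log t ∂expMeasure 1 = -eulerMascheroniConstant := by
  rw [← mittagLefflerMeasure_one, integral_mittagLefflerMeasure (by simp) one_pos,
    ← integral_log_mul_exp_neg]
  simp [mittagLefflerPDF, mittagLeffler_one_one]

theorem integrable_log_expMeasure : Integrable log (expMeasure 1) := by
  refine .of_integral_ne_zero ?_
  rw [integral_log_expMeasure]
  linarith [one_half_lt_eulerMascheroniConstant]

/-- Law of `log (X / T)` for independent `X ~ Exp(1)` and `T ~ μ`. -/
noncomputable def logRatioLaw (μ : Measure ℝ) : Measure ℝ :=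
  ((expMeasure 1).prod μ).map fun p ↦ log p.1 - log p.2

theorem measure_ext_of_Ioi {X : Type*} [TopologicalSpace X] [SecondCountableTopology X]
    [LinearOrder X] [OrderTopology X] [NoMinOrder X] [MeasurableSpace X] [BorelSpace X]
    (μ ν : Measure X) [IsFiniteMeasure μ] (h : ∀ x, μ (Ioi x) = ν (Ioi x)) : μ = ν := by
  refine Measure.ext_of_Ioc' μ ν (fun _ _ _ ↦ by finiteness) fun a b hab ↦ ?_
  rw [← Ioi_sdiff_Ioi, measure_sdiff (Ioi_subset_Ioi hab.le) nullMeasurableSet_Ioi (by finiteness),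
    measure_sdiff (Ioi_subset_Ioi hab.le) nullMeasurableSet_Ioi (h b ▸ by finiteness), h, h]

section LogRatio

variable {μ : Measure ℝ}

theorem logRatioLaw_Ioi [SFinite μ] (hμ : ∀ᵐ t ∂μ, 0 < t) (x : ℝ) :
    logRatioLaw μ (Ioi x) = ∫⁻ t, ENNReal.ofReal (exp (-(exp x * t))) ∂μ := by
  have hmeas : Measurable fun p : ℝ × ℝ ↦ log p.1 - log p.2 := by fun_prop
  rw [logRatioLaw, Measure.map_apply hmeas measurableSet_Ioi,
    Measure.prod_apply_symm (hmeas measurableSet_Ioi)]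
  refine lintegral_congr_ae ?_
  filter_upwards [hμ] with t ht
  have hslice : (fun s ↦ (s, t)) ⁻¹' ((fun p : ℝ × ℝ ↦ log p.1 - log p.2) ⁻¹' Ioi x)
      =ᵐ[expMeasure 1] Ioi (exp x * t) := by
    filter_upwards [ae_expMeasure_pos 1] with s hs
    refine propext ?_
    change x < log s - log t ↔ exp x * t < s
    rw [← log_div hs.ne' ht.ne', lt_log_iff_exp_lt (by positivity), lt_div_iff₀ ht]
  rw [measure_congr hslice, expMeasure_Ioi one_pos (by positivity), one_mul]

theorem logRatioLaw_univ [SFinite μ] : logRatioLaw μ univ = μ univ := by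
  rw [logRatioLaw, Measure.map_apply (by fun_prop) .univ, preimage_univ, ← univ_prod_univ,
    Measure.prod_prod, measure_univ, one_mul]

instance [IsProbabilityMeasure μ] : IsProbabilityMeasure (logRatioLaw μ) :=
  ⟨logRatioLaw_univ.trans measure_univ⟩

theorem integrable_logRatioLaw_iff [IsFiniteMeasure μ] :
    Integrable (fun y ↦ y) (logRatioLaw μ) ↔ Integrable log μ := by
  rw [logRatioLaw, integrable_map_measure (by fun_prop) (by fun_prop)]
  simp only [Function.comp_def, sub_eq_add_neg]
  calc Integrable (fun p : ℝ × ℝ ↦ log p.1 + -log p.2) ((expMeasure 1).prod μ)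
      ↔ Integrable (fun p : ℝ × ℝ ↦ -log p.2) ((expMeasure 1).prod μ) :=
        integrable_add_iff_integrable_right' (integrable_log_expMeasure.comp_fst μ)
    _ ↔ Integrable (fun p : ℝ × ℝ ↦ log p.2) ((expMeasure 1).prod μ) := integrable_neg_iff
    _ ↔ Integrable log μ :=
        Integrable.comp_snd_iff (IsProbabilityMeasure.ne_zero (expMeasure 1))

theorem integral_logRatioLaw [IsProbabilityMeasure μ] (hμ : Integrable log μ) :
    ∫ y, y ∂logRatioLaw μ = -eulerMascheroniConstant - ∫ t, log t ∂μ := by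
  rw [logRatioLaw, integral_map (by fun_prop) (by fun_prop),
    integral_sub (integrable_log_expMeasure.comp_fst μ) (hμ.comp_snd _), integral_fun_fst,
    integral_fun_snd, integral_log_expMeasure]
  simp

end LogRatio

section LogMean

variable {α θ : ℝ}

theorem logRatioLaw_mittagLefflerMeasure_Ioi (hα : α ∈ Ioc 0 1) (hθ : 0 < θ) (x : ℝ) :
    logRatioLaw (mittagLefflerMeasure α θ) (Ioi x) = ENNReal.ofReal (θ / (exp (α * x) + θ)) := by
  rw [logRatioLaw_Ioi (ae_mittagLefflerMeasure_pos α θ),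
    lintegral_exp_mittagLefflerMeasure hα hθ (exp_pos x), ← exp_mul, mul_comm]

theorem logRatioLaw_mittagLefflerMeasure (hα : α ∈ Ioc 0 1) (hθ : 0 < θ) :
    logRatioLaw (mittagLefflerMeasure α θ)
      = (logRatioLaw (expMeasure 1)).map fun y ↦ (y + log θ) / α := by
  refine (measure_ext_of_Ioi _ _ fun x ↦ ?_).symm
  have hpreimage : (fun y ↦ (y + log θ) / α) ⁻¹' Ioi x = Ioi (α * x - log θ) := by
    ext y
    simp only [mem_preimage, mem_Ioi, lt_div_iff₀ hα.1, sub_lt_iff_lt_add, mul_comm x]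
  rw [Measure.map_apply (by fun_prop) measurableSet_Ioi, hpreimage, ← mittagLefflerMeasure_one,
    logRatioLaw_mittagLefflerMeasure_Ioi (by simp) one_pos,
    logRatioLaw_mittagLefflerMeasure_Ioi hα hθ, one_mul, exp_sub, exp_log hθ]
  congr 1
  field_simp

theorem isProbabilityMeasure_mittagLefflerMeasure (hα : α ∈ Ioc 0 1) (hθ : 0 < θ) :
    IsProbabilityMeasure (mittagLefflerMeasure α θ) := by
  constructor
  rw [← logRatioLaw_univ, logRatioLaw_mittagLefflerMeasure hα hθ,
    Measure.map_apply (by fun_prop) .univ, preimage_univ, logRatioLaw_univ, measure_univ]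

theorem integrable_log_mittagLefflerMeasure (hα : α ∈ Ioc 0 1) (hθ : 0 < θ) :
    Integrable log (mittagLefflerMeasure α θ) := by
  have := isProbabilityMeasure_mittagLefflerMeasure hα hθ
  rw [← integrable_logRatioLaw_iff, logRatioLaw_mittagLefflerMeasure hα hθ,
    integrable_map_measure (by fun_prop) (by fun_prop)]
  exact ((integrable_logRatioLaw_iff.mpr integrable_log_expMeasure).add
    (integrable_const _)).div_const α

theorem integral_log_mittagLefflerMeasure (hα : α ∈ Ioc 0 1) (hθ : 0 < θ) :
    ∫ t, log t ∂mittagLefflerMeasure α θ = -log θ / α - eulerMascheroniConstant := by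
  have := isProbabilityMeasure_mittagLefflerMeasure hα hθ
  have hmean : ∫ y, y ∂logRatioLaw (mittagLefflerMeasure α θ) = log θ / α := by
    rw [logRatioLaw_mittagLefflerMeasure hα hθ, integral_map (by fun_prop) (by fun_prop),
      integral_div, integral_add (integrable_logRatioLaw_iff.mpr integrable_log_expMeasure)
      (integrable_const _), integral_logRatioLaw integrable_log_expMeasure, integral_log_expMeasure]
    simp
  rw [integral_logRatioLaw (integrable_log_mittagLefflerMeasure hα hθ)] at hmean
  rw [neg_div]
  linarith

end LogMean

theorem stmt13 (α θ : ℝ) (hα : α ∈ Set.Ioc (0:ℝ) 1) (hθ : 0 < θ) :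
    IntegrableOn
      (fun t : ℝ => Real.log t * (θ * t ^ (α - 1) * mittagLeffler α α (-θ * t ^ α)))
      (Set.Ioi 0) ∧
    (∫ t in Set.Ioi (0:ℝ),
        Real.log t * (θ * t ^ (α - 1) * mittagLeffler α α (-θ * t ^ α)))
      = -Real.log θ / α - Real.eulerMascheroniConstant :=
  ⟨(integrable_mittagLefflerMeasure_iff hα hθ).mp (integrable_log_mittagLefflerMeasure hα hθ),
    (integral_mittagLefflerMeasure hα hθ log).symm.trans (integral_log_mittagLefflerMeasure hα hθ)⟩
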